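/- arXiv:1801.04702 — 2 statements merged into one kernel-verified Lean document; each statement's English description precedes it below -/
import Mathlib

section
/- Let n ≥ 2 be even, let T be an almost regular tournament on n vertices, let x be a vertex of T, and let Q be a set of unordered pairs of distinct vertices. If the number of vertices y with {x,y} ∈ Q and x→y in T is strictly less than n/2, then there exists a tournament T' on the same vertex set agreeing with T on Q in which x is not a vertex of maximum out-degree. -/
/-- A tournament: irreflexive, and for distinct vertices exactly one orientation holds. -/
def IsTournament {V : Type*} (r : V → V → Prop) : Prop :=
  (∀ x, ¬ r x x) ∧ ∀ x y : V, x ≠ y → (r x y ↔ ¬ r y x)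

open Classical in
/-- Out-degree of a vertex: number of `y` with `r x y`. -/
noncomputable def outDeg {V : Type*} [Fintype V] (r : V → V → Prop) (x : V) : ℕ :=
  (Finset.univ.filter fun y => r x y).card

open Classical in
/-- In-degree of a vertex: number of `y` with `r y x`. -/
noncomputable def inDeg {V : Type*} [Fintype V] (r : V → V → Prop) (x : V) : ℕ :=
  (Finset.univ.filter fun y => r y x).card

/-- A king: reaches every other vertex by a path of length at most 2. -/
def IsKing {V : Type*} (r : V → V → Prop) (x : V) : Prop :=
  ∀ y : V, y ≠ x → r x y ∨ ∃ z, r x z ∧ r z y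

/-- A vertex of maximum out-degree. -/
def IsMOD {V : Type*} [Fintype V] (r : V → V → Prop) (x : V) : Prop :=
  ∀ y : V, outDeg r y ≤ outDeg r x

/-- `r'` agrees with `r` on the set `Q` of unordered pairs. -/
def AgreesOn {V : Type*} (r r' : V → V → Prop) (Q : Set (Sym2 V)) : Prop :=
  ∀ y z : V, s(y, z) ∈ Q → (r' y z ↔ r y z)

/-!
A vertex of maximum out-degree has out-degree at least `⌊n/2⌋`, since the average out-degree of a
tournament is `(n - 1)/2`. So if `x` has maximum out-degree, one of its out-arcs `x → y` is not
covered by `Q`, and reversing that arc lowers the out-degree of `x` by one and raises that of `y`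
by one. Out-degrees in an almost regular tournament differ by at most one, so `y` ends up strictly
above `x`.
-/

section Reversal

variable {V : Type*} {r : V → V → Prop}

/-- The relation `r` with the pairs in `P` reversed: the adversary's move, made with a single pair
outside `Q`. As the pairs are unordered, reversal is defined, and keeps tournaments tournaments, for
every `P`. -/
def reverseOn (r : V → V → Prop) (P : Set (Sym2 V)) (a b : V) : Prop :=
  (s(a, b) ∈ P ∧ r b a) ∨ (s(a, b) ∉ P ∧ r a b)

theorem isTournament_reverseOn (hr : IsTournament r) (P : Set (Sym2 V)) :
    IsTournament (reverseOn r P) := by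
  refine ⟨fun a h => hr.1 a (h.elim And.right And.right), fun a b hab => ?_⟩
  have hab_iff := hr.2 a b hab
  simp only [reverseOn, Sym2.eq_swap (a := b) (b := a)]
  tauto

theorem agreesOn_reverseOn {P Q : Set (Sym2 V)} (hPQ : Disjoint P Q) :
    AgreesOn r (reverseOn r P) Q := by
  intro a b hQ
  have hP : s(a, b) ∉ P := Set.disjoint_right.1 hPQ hQ
  simp [reverseOn, hP]

theorem reverseOn_singleton_left_iff {x y z : V} (hyx : ¬ r y x) :
    reverseOn r {s(x, y)} x z ↔ z ≠ y ∧ r x z := by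
  simp only [reverseOn, Set.mem_singleton_iff, Sym2.congr_right]
  grind

theorem reverseOn_singleton_right_iff {x y z : V} (hxy : r x y) :
    reverseOn r {s(x, y)} y z ↔ z = x ∨ r y z := by
  simp only [reverseOn, Set.mem_singleton_iff, Sym2.eq_swap (a := x) (b := y), Sym2.congr_right]
  grind

end Reversal

section Degree

variable {V : Type*} [Fintype V] {r : V → V → Prop} {x y : V}

theorem outDeg_reverseOn_singleton_left (hxy : r x y) (hyx : ¬ r y x) :
    outDeg (reverseOn r {s(x, y)}) x + 1 = outDeg r x := by
  classical
  have herase : ({z | reverseOn r {s(x, y)} x z} : Finset V)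
      = ({z | r x z} : Finset V).erase y := by
    ext z
    simp [reverseOn_singleton_left_iff hyx]
  simpa only [outDeg, herase] using Finset.card_erase_add_one (by simpa using hxy)

theorem outDeg_reverseOn_singleton_right (hxy : r x y) (hyx : ¬ r y x) :
    outDeg (reverseOn r {s(x, y)}) y = outDeg r y + 1 := by
  classical
  have hinsert : ({z | reverseOn r {s(x, y)} y z} : Finset V)
      = insert x ({z | r y z} : Finset V) := by
    ext z
    simp [reverseOn_singleton_right_iff hxy]
  simpa only [outDeg, hinsert] using Finset.card_insert_of_notMem (by simpa using hyx)

theorem sum_outDeg_eq_sum_inDeg (r : V → V → Prop) : ∑ w, outDeg r w = ∑ w, inDeg r w := by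
  simp only [outDeg, inDeg, Finset.card_filter]
  exact Finset.sum_comm

namespace IsTournament

theorem outDeg_add_inDeg_add_one (hr : IsTournament r) (w : V) :
    outDeg r w + inDeg r w + 1 = Fintype.card V := by
  classical
  have hcompl : ({z | ¬ r w z} : Finset V) = insert w ({z | r z w} : Finset V) := by
    ext z
    rcases eq_or_ne z w with rfl | hzw
    · simp [hr.1]
    · simp [hzw, hr.2 z w hzw]
  rw [← Finset.card_univ, ← Finset.card_filter_add_card_filter_not (r w), hcompl,
    Finset.card_insert_of_notMem (by simp [hr.1]), ← add_assoc, outDeg, inDeg]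

theorem two_mul_sum_outDeg_add_card (hr : IsTournament r) :
    2 * ∑ w, outDeg r w + Fintype.card V = Fintype.card V * Fintype.card V :=
  calc 2 * ∑ w, outDeg r w + Fintype.card V
      = ∑ w, (outDeg r w + inDeg r w + 1) := by
        simp [Finset.sum_add_distrib, ← sum_outDeg_eq_sum_inDeg, two_mul]
    _ = Fintype.card V * Fintype.card V := by simp [hr.outDeg_add_inDeg_add_one]

theorem card_div_two_le_outDeg_of_isMOD (hr : IsTournament r) (hx : IsMOD r x) :
    Fintype.card V / 2 ≤ outDeg r x := by
  have hpos : 0 < Fintype.card V := Fintype.card_pos_iff.2 ⟨x⟩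
  have hsum : ∑ w, outDeg r w ≤ Fintype.card V * outDeg r x := by
    simpa using Finset.sum_le_card_nsmul Finset.univ (outDeg r) _ fun w _ => hx w
  have hcard : Fintype.card V ≤ 2 * outDeg r x + 1 := by
    refine Nat.le_of_mul_le_mul_left ?_ hpos
    linarith [hr.two_mul_sum_outDeg_add_card]
  omega

theorem not_isMOD_reverseOn_singleton (hr : IsTournament r) (hxy : r x y)
    (hle : outDeg r x ≤ outDeg r y + 1) : ¬ IsMOD (reverseOn r {s(x, y)}) x := by
  have hne : x ≠ y := fun h => hr.1 x (h ▸ hxy)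
  have hyx : ¬ r y x := (hr.2 x y hne).1 hxy
  intro hmod
  have hy := hmod y
  have hleft := outDeg_reverseOn_singleton_left hxy hyx
  have hright := outDeg_reverseOn_singleton_right hxy hyx
  omega

end IsTournament

open Classical in
theorem exists_notMem_of_card_filter_lt_outDeg {Q : Set (Sym2 V)}
    (hlt : (Finset.univ.filter fun y : V => s(x, y) ∈ Q ∧ r x y).card < outDeg r x) :
    ∃ y, r x y ∧ s(x, y) ∉ Q := by
  obtain ⟨y, hxy, hy⟩ := Finset.exists_mem_notMem_of_card_lt_card hlt
  simp only [Finset.mem_filter, Finset.mem_univ, true_and] at hxy hy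
  exact ⟨y, hxy, fun hQ => hy ⟨hQ, hxy⟩⟩

end Degree

open Classical in
theorem adversary_even_out_general {V : Type*} [Fintype V] {r : V → V → Prop}
    (hr : IsTournament r) {x : V} (hle : ∀ w, outDeg r x ≤ outDeg r w + 1) {Q : Set (Sym2 V)}
    (hfew : (Finset.univ.filter fun y : V => s(x, y) ∈ Q ∧ r x y).card < Fintype.card V / 2) :
    ∃ r' : V → V → Prop, IsTournament r' ∧ AgreesOn r r' Q ∧ ¬ IsMOD r' x := by
  by_cases hmod : IsMOD r x
  · obtain ⟨y, hxy, hyQ⟩ := exists_notMem_of_card_filter_lt_outDeg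
      (hfew.trans_le (hr.card_div_two_le_outDeg_of_isMOD hmod))
    exact ⟨reverseOn r {s(x, y)}, isTournament_reverseOn hr _,
      agreesOn_reverseOn (Set.disjoint_singleton_left.2 hyQ),
      hr.not_isMOD_reverseOn_singleton hxy (hle y)⟩
  · exact ⟨r, hr, fun _ _ _ => Iff.rfl, hmod⟩

open Classical in
/-- even almost regular case: if fewer than `n/2` out-arcs at `x` are
covered by `Q`, some tournament agreeing with `T` on `Q` has `x` not of maximum
out-degree. -/
theorem adversary_even_out {V : Type*} [Fintype V] (r : V → V → Prop)
    (hT : IsTournament r) (hn : 2 ≤ Fintype.card V) (heven : Even (Fintype.card V))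
    (har : ∀ w : V, outDeg r w = Fintype.card V / 2 ∨ outDeg r w = Fintype.card V / 2 - 1)
    (x : V) (Q : Set (Sym2 V)) (hQ : ∀ p ∈ Q, ¬ p.IsDiag)
    (hfew : (Finset.univ.filter fun y : V => s(x, y) ∈ Q ∧ r x y).card
              < Fintype.card V / 2) :
    ∃ r' : V → V → Prop, IsTournament r' ∧ AgreesOn r r' Q ∧ ¬ IsMOD r' x :=
  adversary_even_out_general hT (fun w => by have := har x; have := har w; omega) hfew
end

section
/- Let n ≥ 2 be even, let T be an almost regular tournament on n vertices, let x and y be distinct vertices of T, and let Q be a set of unordered pairs of distinct vertices. If the number of vertices z with {y,z} ∈ Q and z→y in T is at most n/2 − 2, then there exists a tournament T' on the same vertex set agreeing with T on Q in which y has strictly larger out-degree than x; in particular, x is not a vertex of maximum out-degree in T'. -/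
/-!
The adversary keeps the arcs of `r` on `Q` and takes every other arc from a tournament in which `y`
is a source and `x` is a sink. In the result `x` wins only its arcs locked by `Q`, and `y` loses
only its arcs locked by `Q`, so on `n` vertices `y` overtakes `x` as soon as these two numbers sum
to less than `n - 1`. If no arc into `y` is locked, then neither `x` nor `y` is a locked
out-neighbour of `x`, so the sum is at most `n - 2`; otherwise `n / 2 ≥ 3`, and the sum is at most
`n / 2 + (n / 2 - 2)`.
-/

open Classical in
/-- The out-neighbours of `v` in `r` along arcs whose underlying pair lies in `Q`: the out-arcs of
`v` that no tournament agreeing with `r` on `Q` can reverse. -/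
noncomputable def lockedOut {V : Type*} [Fintype V] (r : V → V → Prop) (Q : Set (Sym2 V)) (v : V) :
    Finset V :=
  Finset.univ.filter fun z => s(v, z) ∈ Q ∧ r v z

open Classical in
/-- The in-neighbours of `v` in `r` along arcs whose underlying pair lies in `Q`: the in-arcs of
`v` that no tournament agreeing with `r` on `Q` can reverse. -/
noncomputable def lockedIn {V : Type*} [Fintype V] (r : V → V → Prop) (Q : Set (Sym2 V)) (v : V) :
    Finset V :=
  Finset.univ.filter fun z => s(v, z) ∈ Q ∧ r z v

/-- The relation equal to `r` on the pairs in `Q` and to `p` on all other pairs; it turns a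
preferred tournament `p` into one that agrees with `r` on `Q`. -/
def mergeOn {V : Type*} (Q : Set (Sym2 V)) (r p : V → V → Prop) (a b : V) : Prop :=
  (s(a, b) ∈ Q ∧ r a b) ∨ (s(a, b) ∉ Q ∧ p a b)

section Relations

variable {V : Type*} {r p : V → V → Prop} {Q : Set (Sym2 V)}

theorem agreesOn_mergeOn : AgreesOn r (mergeOn Q r p) Q := by
  intro a b hab
  simp [mergeOn, hab]

theorem isTournament_mergeOn (hr : IsTournament r) (hp : IsTournament p) :
    IsTournament (mergeOn Q r p) := by
  refine ⟨fun a => ?_, fun a b hab => ?_⟩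
  · simp [mergeOn, hr.1 a, hp.1 a]
  · by_cases hQ : s(a, b) ∈ Q
    · simpa [mergeOn, Sym2.eq_swap (a := b), hQ] using hr.2 a b hab
    · simpa [mergeOn, Sym2.eq_swap (a := b), hQ] using hp.2 a b hab

theorem isTournament_of_isStrictTotalOrder [IsStrictTotalOrder V r] : IsTournament r :=
  ⟨irrefl, fun a b hab =>
    ⟨asymm, fun hba => (trichotomous_of r a b).resolve_right (not_or.2 ⟨hab, hba⟩)⟩⟩

theorem exists_isTournament_source_sink {x y : V} (hxy : x ≠ y) :
    ∃ p : V → V → Prop, IsTournament p ∧ (∀ z, ¬ p z y) ∧ ∀ z, ¬ p x z := by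
  have hw : IsTournament (WellOrderingRel (α := V)) := isTournament_of_isStrictTotalOrder
  refine ⟨fun a b => b ≠ y ∧ a ≠ x ∧ (a = y ∨ b = x ∨ WellOrderingRel a b),
    ⟨fun a => ?_, fun a b hab => ?_⟩, by simp, by simp⟩
  · have hirrefl := hw.1 a
    grind
  · have hasymm := hw.2 a b hab
    grind

end Relations

section Degrees

variable {V : Type*} [Fintype V] {r p : V → V → Prop} {Q : Set (Sym2 V)} {x y : V}

open Classical in
theorem IsTournament.outDeg_add_inDeg_add_one_s9 (hr : IsTournament r) (v : V) :
    outDeg r v + inDeg r v + 1 = Fintype.card V := by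
  have hcompl : (Finset.univ.filter fun z => r v z)ᶜ =
      insert v (Finset.univ.filter fun z => r z v) := by
    ext z
    have hirrefl := hr.1 v
    have hasymm := hr.2 v z
    simp only [Finset.mem_compl, Finset.mem_insert, Finset.mem_filter_univ]
    grind
  have hcard := Finset.card_add_card_compl (Finset.univ.filter fun z => r v z)
  rwa [hcompl, Finset.card_insert_of_notMem (by simp [hr.1 v]), ← add_assoc] at hcard

theorem outDeg_mergeOn_of_sink (hx : ∀ z, ¬ p x z) :
    outDeg (mergeOn Q r p) x = (lockedOut r Q x).card := by
  unfold outDeg lockedOut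
  congr with z
  simp [mergeOn, hx]

theorem inDeg_mergeOn_of_source (hy : ∀ z, ¬ p z y) :
    inDeg (mergeOn Q r p) y = (lockedIn r Q y).card := by
  unfold inDeg lockedIn
  congr with z
  simp [mergeOn, hy, Sym2.eq_swap (a := y)]

open Classical in
theorem card_lockedOut_le_outDeg : (lockedOut r Q x).card ≤ outDeg r x :=
  Finset.card_le_card (Finset.monotone_filter_right _ fun _ _ => And.right)

theorem mem_lockedOut_iff_mem_lockedIn : y ∈ lockedOut r Q x ↔ x ∈ lockedIn r Q y := by
  simp [lockedOut, lockedIn, Sym2.eq_swap (a := y)]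

theorem card_lockedOut_add_one_lt_card (hirrefl : ¬ r x x) (hxy : x ≠ y)
    (hy : y ∉ lockedOut r Q x) : (lockedOut r Q x).card + 1 < Fintype.card V := by
  classical
  have hx : x ∉ lockedOut r Q x := by simp [lockedOut, hirrefl]
  have hdisj : Disjoint (lockedOut r Q x) {x, y} := by simp [hx, hy]
  calc (lockedOut r Q x).card + 1
      < (lockedOut r Q x).card + ({x, y} : Finset V).card := by simp [Finset.card_pair hxy]
    _ = (lockedOut r Q x ∪ {x, y}).card := (Finset.card_union_of_disjoint hdisj).symm
    _ ≤ Fintype.card V := Finset.card_le_univ _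

theorem card_lockedOut_add_card_lockedIn_lt (hirrefl : ¬ r x x) (hxy : x ≠ y)
    (hx : outDeg r x ≤ Fintype.card V / 2)
    (hy : (lockedIn r Q y).card ≤ Fintype.card V / 2 - 2) :
    (lockedOut r Q x).card + (lockedIn r Q y).card + 1 < Fintype.card V := by
  rcases (lockedIn r Q y).eq_empty_or_nonempty with hempty | hnonempty
  · have hyx : y ∉ lockedOut r Q x := by simp [mem_lockedOut_iff_mem_lockedIn, hempty]
    simpa [hempty] using card_lockedOut_add_one_lt_card hirrefl hxy hyx
  · have hpos := hnonempty.card_pos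
    have hout := card_lockedOut_le_outDeg (r := r) (Q := Q) (x := x)
    omega

theorem adversary_even_in_general (hr : IsTournament r) (hxy : x ≠ y)
    (hlocked : (lockedOut r Q x).card + (lockedIn r Q y).card + 1 < Fintype.card V) :
    ∃ r' : V → V → Prop, IsTournament r' ∧ AgreesOn r r' Q ∧
      outDeg r' x < outDeg r' y ∧ ¬ IsMOD r' x := by
  obtain ⟨p, hp, hsource, hsink⟩ := exists_isTournament_source_sink hxy
  have hmerge : IsTournament (mergeOn Q r p) := isTournament_mergeOn hr hp
  have hlt : outDeg (mergeOn Q r p) x < outDeg (mergeOn Q r p) y := by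
    have hout := outDeg_mergeOn_of_sink (r := r) (Q := Q) hsink
    have hin := inDeg_mergeOn_of_source (r := r) (Q := Q) hsource
    have hsum := hmerge.outDeg_add_inDeg_add_one_s9 y
    omega
  exact ⟨mergeOn Q r p, hmerge, agreesOn_mergeOn, hlt, fun hmod => (hmod y).not_gt hlt⟩

end Degrees

open Classical in
/-- even almost regular case: if at most `n/2 - 2` in-arcs at `y` are
covered by `Q`, some tournament agreeing with `T` on `Q` gives `y` strictly larger
out-degree than `x`; in particular `x` is not of maximum out-degree there. -/
theorem adversary_even_in {V : Type*} [Fintype V] (r : V → V → Prop)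
    (hT : IsTournament r) (hn : 2 ≤ Fintype.card V) (heven : Even (Fintype.card V))
    (har : ∀ w : V, outDeg r w = Fintype.card V / 2 ∨ outDeg r w = Fintype.card V / 2 - 1)
    (x y : V) (hxy : x ≠ y) (Q : Set (Sym2 V)) (hQ : ∀ p ∈ Q, ¬ p.IsDiag)
    (hfew : (Finset.univ.filter fun z : V => s(y, z) ∈ Q ∧ r z y).card
              ≤ Fintype.card V / 2 - 2) :
    ∃ r' : V → V → Prop, IsTournament r' ∧ AgreesOn r r' Q ∧
      outDeg r' x < outDeg r' y ∧ ¬ IsMOD r' x := by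
  have hx : outDeg r x ≤ Fintype.card V / 2 := by rcases har x with h | h <;> omega
  exact adversary_even_in_general hT hxy (card_lockedOut_add_card_lockedIn_lt (hT.1 x) hxy hx hfew)
end
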